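/- arXiv:2406.00705 — 2 statements merged into one kernel-verified Lean document; each statement's English description precedes it below -/
import Mathlib

section
/- Let U : H → H be L_u-Lipschitz continuous and ρ-strongly monotone with respect to its zero set, with Z(U) nonempty, and set κ = ρ/L_u². Let β0, β1, β2 be constants satisfying: β2 > max{4 + 12/(ρκ), 6, 16/(ρκ)}; max{4(β2−3), (8/(ρκ))(β2−3)} < β1 < β2(β2−2)/2; and (2/ρ)(−2β2 + β1 + 4) < β0 < (κβ1/2)·min{(−2β2 + β1 + 4)/(2(β2−3)), (β2−4)/3}. Then U has a unique zero x*, and every three-times differentiable trajectory x : [t0,∞) → H satisfying x'''(t) + β2 x''(t) + β1 x'(t) + β0 U(x(t)) = 0 for all t ≥ t0 satisfies ‖x(t) − x*‖² ≤ C e^{−2t} for all t ≥ t0, for some constant C > 0. -/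
open InnerProductSpace

/-! Write `y = x - x*`. Strong monotonicity and the Lipschitz bound give
`ρ‖y‖² + κ‖U x‖² ≤ 2⟪U x, y⟫`. Replacing `U x` by `-(x''' + β2 x'' + β1 x') / β0` turns this into
a quadratic inequality in `y, y', y'', y'''`, which makes a suitable quadratic form `E` in
`y, y', y''` satisfy `E' + 2E ≤ 0`. The form `E` need not be positive, but it starts a cascade:
`F' + (2 + δ)F ≤ E` for a quadratic form `F` in `y, y'` and some `δ > 0`, and
`(‖y‖²)' + (β2 - 4)‖y‖² ≤ 2F`. As `2 + δ` and `β2 - 4` exceed `2`, an upper bound `C e^{-2t}`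
passes from `E` to `F` and then to `‖y‖²`. -/

open Set

section ExponentialBounds

variable {f f' : ℝ → ℝ} {a r K : ℝ}

lemma le_max_of_deriv_nonpos_of_le
    (hf : ∀ t ∈ Ici a, HasDerivWithinAt f (f' t) (Ici a) t)
    (hf' : ∀ t ∈ Ici a, K ≤ f t → f' t ≤ 0) {t : ℝ} (ht : t ∈ Ici a) :
    f t ≤ max (f a) K := by
  have below_line : ∀ ε > 0, f t ≤ max (f a) K + ε * (t - a) := by
    intro ε hε
    have line_deriv (s : ℝ) : HasDerivAt (fun s ↦ max (f a) K + ε * (s - a)) ε s := by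
      simpa using (((hasDerivAt_id s).sub_const a).const_mul ε).const_add (max (f a) K)
    refine image_le_of_deriv_right_lt_deriv_boundary (a := a) (f' := f')
      (fun s hs ↦ (hf s hs.1).continuousWithinAt.mono Icc_subset_Ici_self)
      (fun s hs ↦ (hf s hs.1).mono (Ici_subset_Ici.2 hs.1)) (by simp) line_deriv ?_ ⟨ht, le_rfl⟩
    intro s hs hfs
    have hK : K ≤ f s := by
      rw [hfs]
      exact (le_max_right _ _).trans
        (le_add_of_nonneg_right (mul_nonneg hε.le (sub_nonneg.2 hs.1)))
    exact (hf' s hs.1 hK).trans_lt hε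
  have hta : 0 ≤ t - a := sub_nonneg.2 ht
  refine le_of_forall_pos_le_add fun η hη ↦ (below_line (η / (t - a + 1)) (by positivity)).trans ?_
  gcongr
  rw [div_mul_eq_mul_div, div_le_iff₀ (by positivity)]
  gcongr
  linarith

lemma exists_le_mul_exp_of_deriv_le
    (hf : ∀ t ∈ Ici a, HasDerivWithinAt f (f' t) (Ici a) t)
    (hf' : ∀ t ∈ Ici a, K * Real.exp (-r * t) ≤ f t → f' t ≤ -r * f t) :
    ∃ C : ℝ, ∀ t ∈ Ici a, f t ≤ C * Real.exp (-r * t) := by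
  have le_iff (c t : ℝ) : c * Real.exp (-r * t) ≤ f t ↔ c ≤ Real.exp (r * t) * f t := by
    rw [neg_mul, Real.exp_neg, ← div_eq_mul_inv, div_le_iff₀' (Real.exp_pos _)]
  have scaled_deriv : ∀ t ∈ Ici a, HasDerivWithinAt (fun t ↦ Real.exp (r * t) * f t)
      (Real.exp (r * t) * (f' t + r * f t)) (Ici a) t := by
    intro t ht
    have exp_deriv : HasDerivAt (fun t ↦ Real.exp (r * t)) (Real.exp (r * t) * r) t := by
      simpa using ((hasDerivAt_id t).const_mul r).exp
    exact (exp_deriv.hasDerivWithinAt.mul (hf t ht)).congr_deriv (by ring)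
  refine ⟨max (Real.exp (r * a) * f a) K, fun t ht ↦ ?_⟩
  rw [neg_mul, Real.exp_neg, ← div_eq_mul_inv, le_div_iff₀' (Real.exp_pos _)]
  refine le_max_of_deriv_nonpos_of_le scaled_deriv (fun s hs hK ↦ ?_) ht
  have := hf' s hs ((le_iff K s).2 hK)
  exact mul_nonpos_of_nonneg_of_nonpos (Real.exp_pos _).le (by linarith)

lemma exists_le_mul_exp_of_deriv_le_sub {δ : ℝ} (hδ : 0 < δ)
    (hf : ∀ t ∈ Ici a, HasDerivWithinAt f (f' t) (Ici a) t)
    (hf' : ∀ t ∈ Ici a, f' t ≤ K * Real.exp (-r * t) - (r + δ) * f t) :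
    ∃ C : ℝ, ∀ t ∈ Ici a, f t ≤ C * Real.exp (-r * t) := by
  refine exists_le_mul_exp_of_deriv_le (K := K / δ) hf fun t ht hK ↦ ?_
  rw [div_mul_eq_mul_div, div_le_iff₀' hδ] at hK
  linarith [hf' t ht]

end ExponentialBounds

section Energies

variable {H : Type*} [NormedAddCommGroup H] [InnerProductSpace ℝ H] {k β1 β2 : ℝ}

/-- The form `F` of the cascade, in the displacement `y` and the velocity `v`; the parameter `k`
stands for `κ / (2 β0)`. -/
noncomputable def velocityEnergy (k β1 β2 : ℝ) (y v : H) : ℝ :=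
  ⟪y, v⟫_ℝ + k * β1 * ‖v‖ ^ 2 + (β2 - 4) / 2 * ‖y‖ ^ 2

/-- The form `E` of the cascade, in the displacement `y`, the velocity `v` and the acceleration `a`.
Its coefficients make `E' + 2E` equal to `⟪y, ℓ⟫ + k‖ℓ‖²`, where `ℓ = y''' + β2 y'' + β1 y'`, up to
multiples of the squares `‖y‖²`, `‖y'‖²`, `‖y''‖²` and `‖y'''‖²`. -/
noncomputable def accelerationEnergy (k β1 β2 : ℝ) (y v a : H) : ℝ :=
  ⟪y, a⟫_ℝ + (β2 - 2) * ⟪y, v⟫_ℝ + (-2 * β2 + β1 + 4) / 2 * ‖y‖ ^ 2 +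
    k * β2 * ‖a‖ ^ 2 + 2 * k * β1 * ⟪v, a⟫_ℝ + (k * β1 * (β2 - 2) - 1 / 2) * ‖v‖ ^ 2

lemma hasDerivWithinAt_velocityEnergy {y v : ℝ → H} {a : H} {s : Set ℝ} {t : ℝ}
    (hy : HasDerivWithinAt y (v t) s t) (hv : HasDerivWithinAt v a s t) :
    HasDerivWithinAt (fun t ↦ velocityEnergy k β1 β2 (y t) (v t))
      (accelerationEnergy k β1 β2 (y t) (v t) a - 2 * velocityEnergy k β1 β2 (y t) (v t) -
        (((-2 * β2 + β1 + 4) / 2 - (β2 - 4)) * ‖y t‖ ^ 2 +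
          (k * β1 * (β2 - 4) - 3 / 2) * ‖v t‖ ^ 2 + k * β2 * ‖a‖ ^ 2)) s t := by
  refine (((hy.inner ℝ hv).add (hv.norm_sq.const_mul (k * β1))).add
    (hy.norm_sq.const_mul ((β2 - 4) / 2))).congr_deriv ?_
  simp only [velocityEnergy, accelerationEnergy, real_inner_self_eq_norm_sq]
  ring

lemma hasDerivWithinAt_accelerationEnergy {y v a : ℝ → H} {j : H} {s : Set ℝ} {t : ℝ}
    (hy : HasDerivWithinAt y (v t) s t) (hv : HasDerivWithinAt v (a t) s t)
    (ha : HasDerivWithinAt a j s t) :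
    HasDerivWithinAt (fun t ↦ accelerationEnergy k β1 β2 (y t) (v t) (a t))
      (⟪y t, j + β2 • a t + β1 • v t⟫_ℝ + k * ‖j + β2 • a t + β1 • v t‖ ^ 2 +
        (-2 * β2 + β1 + 4) * ‖y t‖ ^ 2 -
        (k * β1 * (-2 * β2 + β1 + 4) - (β2 - 3)) * ‖v t‖ ^ 2 -
        k * (β2 * (β2 - 2) - 2 * β1) * ‖a t‖ ^ 2 - k * ‖j‖ ^ 2 -
        2 * accelerationEnergy k β1 β2 (y t) (v t) (a t)) s t := by
  refine ((((((hy.inner ℝ ha).add ((hy.inner ℝ hv).const_mul (β2 - 2))).add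
    (hy.norm_sq.const_mul ((-2 * β2 + β1 + 4) / 2))).add (ha.norm_sq.const_mul (k * β2))).add
    ((hv.inner ℝ ha).const_mul (2 * k * β1))).add
    (hv.norm_sq.const_mul (k * β1 * (β2 - 2) - 1 / 2))).congr_deriv ?_
  simp only [accelerationEnergy, norm_add_sq_real, norm_smul, mul_pow, Real.norm_eq_abs, sq_abs,
    inner_add_left, inner_add_right, real_inner_smul_left, real_inner_smul_right,
    real_inner_self_eq_norm_sq, real_inner_comm (v t) (a t), real_inner_comm (a t) j,
    real_inner_comm (v t) j]
  ring

lemma exists_pos_mul_velocityEnergy_le {p q : ℝ} (hk : 0 ≤ k * β1) (hβ2 : 3 < β2)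
    (hp : 0 < p) (hq : 0 < q) :
    ∃ δ > 0, ∀ y v : H, δ * velocityEnergy k β1 β2 y v ≤ p * ‖y‖ ^ 2 + q * ‖v‖ ^ 2 := by
  have hY : 0 < (β2 - 3) / 2 := by linarith
  have hV : 0 < k * β1 + 1 / 2 := by linarith
  have energy_le (y v : H) : velocityEnergy k β1 β2 y v ≤
      (β2 - 3) / 2 * ‖y‖ ^ 2 + (k * β1 + 1 / 2) * ‖v‖ ^ 2 := by
    have young : 2 * ⟪y, v⟫_ℝ ≤ ‖y‖ ^ 2 + ‖v‖ ^ 2 := by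
      linarith [norm_sub_sq_real y v, sq_nonneg ‖y - v‖]
    unfold velocityEnergy
    linarith
  refine ⟨min (p / ((β2 - 3) / 2)) (q / (k * β1 + 1 / 2)), by positivity, fun y v ↦ ?_⟩
  grw [energy_le, mul_add, ← mul_assoc, ← mul_assoc]
  gcongr
  · exact (le_div_iff₀ hY).1 (min_le_left _ _)
  · exact (le_div_iff₀ hV).1 (min_le_right _ _)

lemma exists_velocityEnergy_le_mul_exp {y v a : ℝ → H} {t0 C : ℝ} (hk : 0 ≤ k) (hβ1 : 0 ≤ β1)
    (hβ2 : 3 < β2) (hβ12 : 4 * (β2 - 3) < β1) (hkβ : 3 / 2 < k * β1 * (β2 - 4))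
    (hy : ∀ t ∈ Ici t0, HasDerivWithinAt y (v t) (Ici t0) t)
    (hv : ∀ t ∈ Ici t0, HasDerivWithinAt v (a t) (Ici t0) t)
    (hE : ∀ t ∈ Ici t0, accelerationEnergy k β1 β2 (y t) (v t) (a t) ≤ C * Real.exp (-2 * t)) :
    ∃ C' : ℝ, ∀ t ∈ Ici t0, velocityEnergy k β1 β2 (y t) (v t) ≤ C' * Real.exp (-2 * t) := by
  obtain ⟨δ, hδ, hδF⟩ := exists_pos_mul_velocityEnergy_le (H := H) (mul_nonneg hk hβ1) hβ2
    (p := (-2 * β2 + β1 + 4) / 2 - (β2 - 4)) (q := k * β1 * (β2 - 4) - 3 / 2)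
    (by linarith) (by linarith)
  refine exists_le_mul_exp_of_deriv_le_sub (K := C) hδ
    (fun t ht ↦ hasDerivWithinAt_velocityEnergy (hy t ht) (hv t ht)) fun t ht ↦ ?_
  have ha : 0 ≤ k * β2 * ‖a t‖ ^ 2 := by positivity
  linarith [hE t ht, hδF (y t) (v t)]

lemma exists_norm_sq_le_mul_exp {y v : ℝ → H} {t0 C r : ℝ} (hk : 0 ≤ k * β1) (hr : r < β2 - 4)
    (hy : ∀ t ∈ Ici t0, HasDerivWithinAt y (v t) (Ici t0) t)
    (hF : ∀ t ∈ Ici t0, velocityEnergy k β1 β2 (y t) (v t) ≤ C * Real.exp (-r * t)) :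
    ∃ C' : ℝ, ∀ t ∈ Ici t0, ‖y t‖ ^ 2 ≤ C' * Real.exp (-r * t) := by
  refine exists_le_mul_exp_of_deriv_le_sub (K := 2 * C) (sub_pos.2 hr)
    (fun t ht ↦ (hy t ht).norm_sq) fun t ht ↦ ?_
  have hFt := hF t ht
  have hv : 0 ≤ k * β1 * ‖v t‖ ^ 2 := by positivity
  unfold velocityEnergy at hFt
  linarith

end Energies

section Trajectories

variable {H : Type*} [NormedAddCommGroup H] [InnerProductSpace ℝ H]

/-- `x`, with velocity `v`, acceleration `a` and jerk `j`, is a trajectory on `[t0, ∞)` of the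
third-order dynamics driven by `U`. The derivatives at `t0` are one-sided. -/
structure IsThirdOrderTrajectory (U : H → H) (β0 β1 β2 t0 : ℝ) (x v a j : ℝ → H) : Prop where
  velocity : ∀ t ∈ Ici t0, HasDerivWithinAt x (v t) (Ici t0) t
  acceleration : ∀ t ∈ Ici t0, HasDerivWithinAt v (a t) (Ici t0) t
  jerk : ∀ t ∈ Ici t0, HasDerivWithinAt a (j t) (Ici t0) t
  ode : ∀ t ∈ Ici t0, j t + β2 • a t + β1 • v t + β0 • U (x t) = 0

variable {U : H → H} {xs : H} {ρ κ β0 β1 β2 t0 : ℝ} {x v a j : ℝ → H}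

lemma IsThirdOrderTrajectory.of_deriv (hx : ∀ t, t0 ≤ t → DifferentiableAt ℝ x t)
    (hx' : ∀ t, t0 ≤ t → DifferentiableAt ℝ (deriv x) t)
    (hx'' : ∀ t, t0 ≤ t → DifferentiableAt ℝ (deriv (deriv x)) t)
    (hode : ∀ t, t0 ≤ t → deriv (deriv (deriv x)) t + β2 • deriv (deriv x) t + β1 • deriv x t +
      β0 • U (x t) = 0) :
    IsThirdOrderTrajectory U β0 β1 β2 t0 x (deriv x) (deriv (deriv x)) (deriv (deriv (deriv x))) :=
  ⟨fun t ht ↦ (hx t ht).hasDerivAt.hasDerivWithinAt,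
    fun t ht ↦ (hx' t ht).hasDerivAt.hasDerivWithinAt,
    fun t ht ↦ (hx'' t ht).hasDerivAt.hasDerivWithinAt, hode⟩

lemma IsThirdOrderTrajectory.dissipation (hx : IsThirdOrderTrajectory U β0 β1 β2 t0 x v a j)
    (hU : ∀ z, ρ * ‖z - xs‖ ^ 2 + κ * ‖U z‖ ^ 2 ≤ 2 * ⟪U z, z - xs⟫_ℝ) (hβ0 : 0 < β0)
    {t : ℝ} (ht : t ∈ Ici t0) :
    ⟪x t - xs, j t + β2 • a t + β1 • v t⟫_ℝ +
      κ / (2 * β0) * ‖j t + β2 • a t + β1 • v t‖ ^ 2 ≤ -(β0 * ρ / 2 * ‖x t - xs‖ ^ 2) := by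
  rw [eq_neg_of_add_eq_zero_left (hx.ode t ht), norm_neg, norm_smul, mul_pow, Real.norm_eq_abs,
    sq_abs, inner_neg_right, real_inner_smul_right, real_inner_comm]
  have cancel : κ / (2 * β0) * (β0 ^ 2 * ‖U (x t)‖ ^ 2) = β0 / 2 * (κ * ‖U (x t)‖ ^ 2) := by
    field_simp
  linarith [mul_le_mul_of_nonneg_left (hU (x t)) (half_pos hβ0).le]

lemma IsThirdOrderTrajectory.exists_accelerationEnergy_le_mul_exp
    (hx : IsThirdOrderTrajectory U β0 β1 β2 t0 x v a j)
    (hU : ∀ z, ρ * ‖z - xs‖ ^ 2 + κ * ‖U z‖ ^ 2 ≤ 2 * ⟪U z, z - xs⟫_ℝ)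
    (hκ : 0 ≤ κ) (hβ0 : 0 < β0) (hβ1 : 2 * β1 ≤ β2 * (β2 - 2))
    (hy : -2 * β2 + β1 + 4 ≤ β0 * ρ / 2)
    (hv : β2 - 3 ≤ κ / (2 * β0) * β1 * (-2 * β2 + β1 + 4)) :
    ∃ C : ℝ, ∀ t ∈ Ici t0,
      accelerationEnergy (κ / (2 * β0)) β1 β2 (x t - xs) (v t) (a t) ≤ C * Real.exp (-2 * t) := by
  refine exists_le_mul_exp_of_deriv_le (K := 0)
    (fun t ht ↦ hasDerivWithinAt_accelerationEnergy ((hx.velocity t ht).sub_const xs)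
      (hx.acceleration t ht) (hx.jerk t ht)) fun t ht _ ↦ ?_
  have hk : 0 ≤ κ / (2 * β0) := by positivity
  have y_term := mul_le_mul_of_nonneg_right hy (sq_nonneg ‖x t - xs‖)
  have v_term := mul_nonneg (sub_nonneg.2 hv) (sq_nonneg ‖v t‖)
  have a_term := mul_nonneg (mul_nonneg hk (sub_nonneg.2 hβ1)) (sq_nonneg ‖a t‖)
  have j_term := mul_nonneg hk (sq_nonneg ‖j t‖)
  linarith [hx.dissipation hU hβ0 ht]

end Trajectories

lemma half_lt_mul_of_lt_mul_div {κ β0 β1 c d : ℝ} (hβ0 : 0 < β0) (hd : 0 < d)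
    (h : β0 < κ * β1 * (c / d)) : d / 2 < κ / (2 * β0) * β1 * c := by
  rw [← mul_div_assoc, lt_div_iff₀ hd] at h
  rw [div_mul_eq_mul_div, div_mul_eq_mul_div, lt_div_iff₀ (by positivity)]
  linarith

lemma add_le_two_mul_inner_of_norm_le {H : Type*} [NormedAddCommGroup H] [InnerProductSpace ℝ H]
    {w y : H} {ρ κ L : ℝ} (hρ : 0 ≤ ρ) (hL : 0 < L) (hκ : κ ≤ ρ / L ^ 2) (hLip : ‖w‖ ≤ L * ‖y‖)
    (hmono : ρ * ‖y‖ ^ 2 ≤ ⟪w, y⟫_ℝ) :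
    ρ * ‖y‖ ^ 2 + κ * ‖w‖ ^ 2 ≤ 2 * ⟪w, y⟫_ℝ := by
  have cocoercive : κ * ‖w‖ ^ 2 ≤ ρ * ‖y‖ ^ 2 := calc
    κ * ‖w‖ ^ 2 ≤ ρ / L ^ 2 * (L * ‖y‖) ^ 2 := by gcongr
    _ = ρ * ‖y‖ ^ 2 := by field_simp
  linarith

theorem stmt10_general {H : Type*} [NormedAddCommGroup H] [InnerProductSpace ℝ H]
    {U : H → H} {xs : H} {ρ κ β0 β1 β2 : ℝ} (hρ : 0 < ρ) (hκ : 0 < κ)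
    (hU : ∀ z, ρ * ‖z - xs‖ ^ 2 + κ * ‖U z‖ ^ 2 ≤ 2 * ⟪U z, z - xs⟫_ℝ)
    (hβ2 : 6 < β2) (hβ1l : 4 * (β2 - 3) < β1) (hβ1u : β1 < β2 * (β2 - 2) / 2)
    (hβ0l : 2 / ρ * (-2 * β2 + β1 + 4) < β0)
    (hβ0u : β0 < κ * β1 * min ((-2 * β2 + β1 + 4) / (2 * (β2 - 3))) ((β2 - 4) / 3)) :
    U xs = 0 ∧ (∀ z, U z = 0 → z = xs) ∧
      ∀ (t0 : ℝ) (x v a j : ℝ → H), IsThirdOrderTrajectory U β0 β1 β2 t0 x v a j →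
        ∃ C : ℝ, 0 < C ∧ ∀ t, t0 ≤ t → ‖x t - xs‖ ^ 2 ≤ C * Real.exp (-2 * t) := by
  refine ⟨?_, fun z hz ↦ ?_, fun t0 x v a j hx ↦ ?_⟩
  · have h : κ * ‖U xs‖ ^ 2 ≤ 0 := by simpa using hU xs
    simpa using nonpos_of_mul_nonpos_right h hκ
  · have h : ρ * ‖z - xs‖ ^ 2 ≤ 0 := by simpa [hz] using hU z
    simpa [sub_eq_zero] using nonpos_of_mul_nonpos_right h hρ
  have hβ1 : 0 < β1 := by linarith
  have hc : 0 < -2 * β2 + β1 + 4 := by linarith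
  have hβ0 : 0 < β0 := lt_trans (by positivity) hβ0l
  have hk : 0 < κ / (2 * β0) := by positivity
  have hy : -2 * β2 + β1 + 4 ≤ β0 * ρ / 2 := by
    rw [div_mul_eq_mul_div, div_lt_iff₀ hρ] at hβ0l
    linarith
  rw [mul_min_of_nonneg _ _ (by positivity), lt_min_iff] at hβ0u
  have hv : β2 - 3 ≤ κ / (2 * β0) * β1 * (-2 * β2 + β1 + 4) := by
    linarith [half_lt_mul_of_lt_mul_div hβ0 (by linarith) hβ0u.1]
  have hkβ : 3 / 2 < κ / (2 * β0) * β1 * (β2 - 4) :=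
    half_lt_mul_of_lt_mul_div hβ0 three_pos hβ0u.2
  have hx' := fun t ht ↦ (hx.velocity t ht).sub_const xs
  obtain ⟨_, hE⟩ :=
    hx.exists_accelerationEnergy_le_mul_exp hU hκ.le hβ0 (by linarith) hy hv
  obtain ⟨_, hF⟩ := exists_velocityEnergy_le_mul_exp hk.le hβ1.le (by linarith) hβ1l hkβ hx'
    hx.acceleration hE
  obtain ⟨C, hC⟩ := exists_norm_sq_le_mul_exp (mul_pos hk hβ1).le (by linarith) hx' hF
  refine ⟨max C 1, by positivity, fun t ht ↦ (hC t ht).trans ?_⟩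
  gcongr
  exact le_max_left C 1

theorem stmt10
    {H : Type*} [NormedAddCommGroup H] [InnerProductSpace ℝ H] [CompleteSpace H]
    (U : H → H) (ρ Lu κ : ℝ) (hρ : 0 < ρ) (hLu : 0 < Lu) (hκ : κ = ρ / Lu ^ 2)
    (hLip : ∀ x y : H, ‖U x - U y‖ ≤ Lu * ‖x - y‖)
    (hmono : ∀ (x xs : H), U xs = 0 → ρ * ‖x - xs‖ ^ 2 ≤ ⟪U x, x - xs⟫_ℝ)
    (hZ : ∃ z : H, U z = 0)
    (β0 β1 β2 : ℝ)
    (hβ2 : β2 > max (4 + 12 / (ρ * κ)) (max 6 (16 / (ρ * κ))))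
    (hβ1l : max (4 * (β2 - 3)) (8 / (ρ * κ) * (β2 - 3)) < β1)
    (hβ1u : β1 < β2 * (β2 - 2) / 2)
    (hβ0l : 2 / ρ * (-2 * β2 + β1 + 4) < β0)
    (hβ0u : β0 < κ * β1 / 2 *
      min ((-2 * β2 + β1 + 4) / (2 * (β2 - 3))) ((β2 - 4) / 3))
    (t0 : ℝ) :
    ∃ xs : H, U xs = 0 ∧ (∀ z : H, U z = 0 → z = xs) ∧
      ∀ x : ℝ → H,
        (∀ t, t0 ≤ t → DifferentiableAt ℝ x t) →
        (∀ t, t0 ≤ t → DifferentiableAt ℝ (deriv x) t) →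
        (∀ t, t0 ≤ t → DifferentiableAt ℝ (deriv (deriv x)) t) →
        (∀ t, t0 ≤ t →
          deriv (deriv (deriv x)) t + β2 • deriv (deriv x) t + β1 • deriv x t +
            β0 • U (x t) = 0) →
        ∃ C : ℝ, 0 < C ∧ ∀ t, t0 ≤ t → ‖x t - xs‖ ^ 2 ≤ C * Real.exp (-2 * t) := by
  obtain ⟨xs, hxs⟩ := hZ
  have hκ0 : 0 < κ := hκ ▸ by positivity
  have hU : ∀ z, ρ * ‖z - xs‖ ^ 2 + κ / 2 * ‖U z‖ ^ 2 ≤ 2 * ⟪U z, z - xs⟫_ℝ := fun z ↦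
    add_le_two_mul_inner_of_norm_le hρ.le hLu (hκ ▸ half_le_self hκ0.le)
      (by simpa [hxs] using hLip z xs) (hmono z xs hxs)
  obtain ⟨hzero, hunique, hdecay⟩ := stmt10_general hρ (half_pos hκ0) hU
    (max_lt_iff.1 (max_lt_iff.1 hβ2).2).1 (max_lt_iff.1 hβ1l).1 hβ1u hβ0l
    (div_mul_eq_mul_div κ 2 β1 ▸ hβ0u)
  exact ⟨xs, hzero, hunique, fun x hx hx' hx'' hode ↦
    hdecay t0 x _ _ _ (.of_deriv hx hx' hx'' hode)⟩
end

section
/- Let f : H → ℝ be convex and differentiable with M-Lipschitz continuous gradient, attaining its minimum value f* at some point x* ∈ H. Let β0, β1, β2 be positive constants with β0 < β1β2/M, let t0 ∈ ℝ, and let x : [t0,∞) → H be three times differentiable and satisfy x'''(t) + β2 x''(t) + β1 x'(t) + β0 ∇f(x(t)) = 0 for all t ≥ t0. Then there exists a constant C > 0 such that f((1/(s − t0)) ∫_{t0}^{s} x(t) dt) − f* ≤ C/(s − t0) for all s > t0. -/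
open InnerProductSpace intervalIntegral

/-!
With `u = x - xs`, `v = x'`, `a = x''`, `g = ∇f(x)`, the energy
`‖a + β2 v + β1 u‖² + ‖a‖² + β1 ‖v‖² + 2 β0 β2 (f(x) - f*)` has derivative
`-2 β0 β1 ⟪g, u⟫ - 4 β0 ⟪g, a⟫ - 2 β2 ‖a‖²` along trajectories. Completing the square in `a` leaves
`-2 β0 β1 ⟪g, u⟫ + 2 (β0² / β2) ‖g‖²`, and cocoercivity of the gradient, `‖g‖² ≤ M ⟪g, u⟫`, bounds
this by `-2 β0 (β1 - β0 M / β2) ⟪g, u⟫`; positivity of the coefficient is the assumption on `β0`.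
Since `f(x) - f* ≤ ⟪g, u⟫`, the gap `f(x) - f*` has bounded integral, and Jensen's inequality turns
this into the rate for the averaged trajectory. The energy is the one the Popov criterion
suggests, with multiplier `u + (β2 / β1) v`.
-/

section ConvexGradient

variable {H : Type*} [NormedAddCommGroup H] [InnerProductSpace ℝ H] [CompleteSpace H]
  {f : H → ℝ} {f' : H → H}

lemma hasDerivAt_comp_of_hasGradientAt {g v : H} {x : ℝ → H} {t : ℝ}
    (hf : HasGradientAt f g (x t)) (hx : HasDerivAt x v t) :
    HasDerivAt (fun s => f (x s)) (inner ℝ g v) t :=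
  hf.hasFDerivAt.comp_hasDerivAt t hx

lemma hasGradientAt_eq_zero_of_isLocalMin {g a : H} (hf : HasGradientAt f g a)
    (hmin : IsLocalMin f a) : g = 0 :=
  (toDual ℝ H).map_eq_zero_iff.mp (hmin.hasFDerivAt_eq_zero hf.hasFDerivAt)

lemma inner_gradient_le_sub_of_convexOn {s : Set H} {a b g : H} (hconv : ConvexOn ℝ s f)
    (ha : a ∈ s) (hb : b ∈ s) (hf : HasGradientAt f g a) :
    inner ℝ g (b - a) ≤ f b - f a := by
  have hline : HasDerivAt (fun r : ℝ => f (AffineMap.lineMap a b r)) (inner ℝ g (b - a)) 0 :=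
    hasDerivAt_comp_of_hasGradientAt (by simpa using hf) AffineMap.hasDerivAt_lineMap
  have hslope := (hconv.comp_affineMap (AffineMap.lineMap a b)).le_slope_of_hasDerivAt
    (x := 0) (y := 1) (by simpa using ha) (by simpa using hb) one_pos hline
  simpa [slope_def_field] using hslope

lemma le_add_inner_gradient_add_sq_norm_of_lipschitzWith {K : NNReal}
    (hf : ∀ z, HasGradientAt f (f' z) z) (hLip : LipschitzWith K f') (a b : H) :
    f b ≤ f a + inner ℝ (f' a) (b - a) + K / 2 * ‖b - a‖ ^ 2 := by
  let line : ℝ → H := AffineMap.lineMap a b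
  have hderiv (r : ℝ) : HasDerivAt (fun r => f (line r)) (inner ℝ (f' (line r)) (b - a)) r :=
    hasDerivAt_comp_of_hasGradientAt (hf _) AffineMap.hasDerivAt_lineMap
  have hbound (r : ℝ) (hr : 0 < r) :
      inner ℝ (f' (line r)) (b - a) ≤ inner ℝ (f' a) (b - a) + r * (K * ‖b - a‖ ^ 2) := by
    have hdist : ‖f' (line r) - f' a‖ ≤ K * (r * ‖b - a‖) := by
      have h := hLip.norm_sub_le (line r) a
      rwa [show line r - a = r • (b - a) from AffineMap.lineMap_vsub_left a b r, norm_smul,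
        Real.norm_of_nonneg hr.le] at h
    calc inner ℝ (f' (line r)) (b - a)
        = inner ℝ (f' a) (b - a) + inner ℝ (f' (line r) - f' a) (b - a) := by
          rw [inner_sub_left, add_sub_cancel]
      _ ≤ inner ℝ (f' a) (b - a) + K * (r * ‖b - a‖) * ‖b - a‖ := by
          gcongr
          exact (real_inner_le_norm _ _).trans (by gcongr)
      _ = inner ℝ (f' a) (b - a) + r * (K * ‖b - a‖ ^ 2) := by ring
  have hint := sub_le_integral_of_hasDeriv_right_of_le zero_le_one
    (fun r _ => (hderiv r).continuousAt.continuousWithinAt)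
    (fun r _ => (hderiv r).hasDerivWithinAt)
    (Continuous.integrableOn_Icc (by fun_prop)) (fun r hr => hbound r hr.1)
  rw [integral_add (by simp) (Continuous.intervalIntegrable (by fun_prop) _ _),
    integral_mul_const, integral_id] at hint
  norm_num [line] at hint
  linarith

lemma sq_norm_gradient_sub_le_of_convexOn {K : NNReal} (hconv : ConvexOn ℝ Set.univ f)
    (hf : ∀ z, HasGradientAt f (f' z) z) (hLip : LipschitzWith K f') (a b : H) :
    ‖f' b - f' a‖ ^ 2 ≤ 2 * K * (f b - f a - inner ℝ (f' a) (b - a)) := by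
  rcases eq_zero_or_pos K with rfl | hK
  · simpa using hLip.norm_sub_le b a
  -- `z` below minimizes the quadratic upper bound at `b` minus the tangent at `a`.
  have hK' : (0 : ℝ) < K := hK
  set d := f' b - f' a with hd
  set z := b - (K : ℝ)⁻¹ • d with hz
  have hlower : inner ℝ (f' a) (z - a) ≤ f z - f a :=
    inner_gradient_le_sub_of_convexOn hconv (Set.mem_univ a) (Set.mem_univ z) (hf a)
  have hupper := le_add_inner_gradient_add_sq_norm_of_lipschitzWith hf hLip b z
  have hzb : z - b = -((K : ℝ)⁻¹ • d) := by rw [hz]; abel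
  have hza : z - a = (b - a) - (K : ℝ)⁻¹ • d := by rw [hz]; abel
  have hdd : inner ℝ (f' b) d - inner ℝ (f' a) d = ‖d‖ ^ 2 := by
    rw [← inner_sub_left, ← hd, real_inner_self_eq_norm_sq]
  rw [hza, inner_sub_right, real_inner_smul_right] at hlower
  rw [hzb, inner_neg_right, real_inner_smul_right, norm_neg, norm_smul, norm_inv,
    Real.norm_of_nonneg hK'.le, mul_pow] at hupper
  have hgap : (K : ℝ)⁻¹ / 2 * ‖d‖ ^ 2 ≤ f b - f a - inner ℝ (f' a) (b - a) := by
    have hsq : (K : ℝ) / 2 * ((K : ℝ)⁻¹ ^ 2 * ‖d‖ ^ 2) = (K : ℝ)⁻¹ / 2 * ‖d‖ ^ 2 := by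
      field_simp
    linear_combination hlower + hupper + hsq - (K : ℝ)⁻¹ * hdd
  calc ‖d‖ ^ 2 = 2 * K * ((K : ℝ)⁻¹ / 2 * ‖d‖ ^ 2) := by field_simp
    _ ≤ 2 * K * (f b - f a - inner ℝ (f' a) (b - a)) := by gcongr

lemma sq_norm_gradient_sub_le_inner_of_convexOn {K : NNReal} (hconv : ConvexOn ℝ Set.univ f)
    (hf : ∀ z, HasGradientAt f (f' z) z) (hLip : LipschitzWith K f') (a b : H) :
    ‖f' a - f' b‖ ^ 2 ≤ K * inner ℝ (f' a - f' b) (a - b) := by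
  have hab := sq_norm_gradient_sub_le_of_convexOn hconv hf hLip a b
  have hba := sq_norm_gradient_sub_le_of_convexOn hconv hf hLip b a
  rw [norm_sub_rev] at hab
  rw [← neg_sub a b, inner_neg_right] at hab
  rw [inner_sub_left]
  linear_combination (hab + hba) / 2

end ConvexGradient

section Jensen

variable {E : Type*} [NormedAddCommGroup E] [NormedSpace ℝ E] [CompleteSpace E]

lemma map_interval_average_le_of_convexOn {f : E → ℝ} {s : Set E} (hconv : ConvexOn ℝ s f)
    (hf : ContinuousOn f s) (hs : IsClosed s) {x : ℝ → E} {a b : ℝ} (hab : a ≠ b)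
    (hx : ContinuousOn x (Set.uIcc a b)) (hxs : Set.MapsTo x (Set.uIcc a b) s) :
    f (⨍ t in a..b, x t) ≤ ⨍ t in a..b, f (x t) := by
  refine hconv.map_set_average_le hf hs ?_ ?_ ?_ ?_ ?_
  · simpa [Real.volume_uIoc, sub_eq_zero] using hab.symm
  · simp [Real.volume_uIoc]
  · exact MeasureTheory.ae_restrict_of_forall_mem measurableSet_uIoc
      fun t ht => hxs (Set.uIoc_subset_uIcc ht)
  · exact hx.intervalIntegrable.def'
  · exact (hf.comp hx hxs).intervalIntegrable.def'

end Jensen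

section Dynamics

variable {H : Type*} [NormedAddCommGroup H] [InnerProductSpace ℝ H]

/-- The Lyapunov function of the equation `x''' + β2 x'' + β1 x' + β0 ∇f(x) = 0`, as a function of
the state: position `x`, velocity `v` and acceleration `a`. -/
noncomputable def lyapunov (f : H → ℝ) (xs : H) (β0 β1 β2 : ℝ) (x v a : H) : ℝ :=
  ‖a + β2 • v + β1 • (x - xs)‖ ^ 2 + ‖a‖ ^ 2 + β1 * ‖v‖ ^ 2 + 2 * β0 * β2 * (f x - f xs)

lemma lyapunov_nonneg {f : H → ℝ} {xs x : H} {β0 β1 β2 : ℝ} (hβ0 : 0 ≤ β0) (hβ1 : 0 ≤ β1)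
    (hβ2 : 0 ≤ β2) (hx : f xs ≤ f x) (v a : H) : 0 ≤ lyapunov f xs β0 β1 β2 x v a := by
  have := sub_nonneg.mpr hx
  unfold lyapunov
  positivity

lemma hasDerivAt_lyapunov [CompleteSpace H] {f : H → ℝ} {x v a : ℝ → H} {g j : H} {t : ℝ}
    {β0 β1 β2 : ℝ} (xs : H) (hx : HasDerivAt x (v t) t) (hv : HasDerivAt v (a t) t)
    (ha : HasDerivAt a j t) (hf : HasGradientAt f g (x t))
    (hode : j + β2 • a t + β1 • v t + β0 • g = 0) :
    HasDerivAt (fun s => lyapunov f xs β0 β1 β2 (x s) (v s) (a s))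
      (-(2 * β0 * β1 * inner ℝ g (x t - xs) + 4 * β0 * inner ℝ g (a t) + 2 * β2 * ‖a t‖ ^ 2))
      t := by
  have hsum := (ha.add (hv.const_smul β2)).add ((hx.sub_const xs).const_smul β1)
  have hgap := (hasDerivAt_comp_of_hasGradientAt hf hx).sub_const (f xs)
  refine (((hsum.norm_sq.add ha.norm_sq).add (hv.norm_sq.const_mul β1)).add
    (hgap.const_mul (2 * β0 * β2))).congr_deriv ?_
  have hj : j = -(β2 • a t + β1 • v t + β0 • g) :=
    eq_neg_of_add_eq_zero_left (by rw [← hode]; abel)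
  have hsum' : j + β2 • a t + β1 • v t = -(β0 • g) := eq_neg_of_add_eq_zero_left hode
  simp only [Pi.add_apply, Pi.smul_apply]
  rw [hsum', hj]
  simp only [inner_neg_right, inner_add_left, inner_add_right, real_inner_smul_left,
    real_inner_smul_right, real_inner_self_eq_norm_sq, real_inner_comm (a t) g,
    real_inner_comm (v t) g, real_inner_comm (x t - xs) g, real_inner_comm (v t) (a t)]
  ring

lemma mul_inner_le_dissipation_of_sq_norm_le_inner {g u : H} {K β2 : ℝ} (β0 β1 : ℝ) (a : H)
    (hβ2 : 0 < β2) (hg : ‖g‖ ^ 2 ≤ K * inner ℝ g u) :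
    2 * β0 * (β1 - β0 * K / β2) * inner ℝ g u ≤
      2 * β0 * β1 * inner ℝ g u + 4 * β0 * inner ℝ g a + 2 * β2 * ‖a‖ ^ 2 := by
  have hsquare : 0 ≤ ‖β2 • a + β0 • g‖ ^ 2 := sq_nonneg _
  rw [norm_add_sq_real, norm_smul, norm_smul, mul_pow, mul_pow, Real.norm_eq_abs,
    Real.norm_eq_abs, sq_abs, sq_abs, real_inner_smul_left, real_inner_smul_right,
    real_inner_comm] at hsquare
  have hcoco : 0 ≤ β0 ^ 2 * (K * inner ℝ g u - ‖g‖ ^ 2) :=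
    mul_nonneg (sq_nonneg _) (sub_nonneg.mpr hg)
  have hsum := mul_nonneg (by positivity : 0 ≤ 2 / β2) (add_nonneg hsquare hcoco)
  refine sub_nonneg.mp (hsum.trans_eq ?_)
  field_simp
  ring

lemma mul_integral_gap_le_lyapunov [CompleteSpace H] {f : H → ℝ} {f' : H → H} {K : NNReal}
    {xs : H} {β0 β1 β2 t0 s : ℝ} {x v a j : ℝ → H} (hconv : ConvexOn ℝ Set.univ f)
    (hf : ∀ z, HasGradientAt f (f' z) z) (hLip : LipschitzWith K f') (hmin : ∀ z, f xs ≤ f z)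
    (hβ0 : 0 ≤ β0) (hβ2 : 0 < β2) (hβ : β0 * K ≤ β1 * β2) (hs : t0 ≤ s)
    (hx : ∀ t ∈ Set.Icc t0 s, HasDerivAt x (v t) t)
    (hv : ∀ t ∈ Set.Icc t0 s, HasDerivAt v (a t) t)
    (ha : ∀ t ∈ Set.Icc t0 s, HasDerivAt a (j t) t)
    (hode : ∀ t ∈ Set.Icc t0 s, j t + β2 • a t + β1 • v t + β0 • f' (x t) = 0) :
    2 * β0 * (β1 - β0 * K / β2) * ∫ t in t0..s, (f (x t) - f xs) ≤
      lyapunov f xs β0 β1 β2 (x t0) (v t0) (a t0) := by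
  set c := 2 * β0 * (β1 - β0 * K / β2)
  have hc : 0 ≤ c :=
    mul_nonneg (by positivity) (sub_nonneg.mpr ((div_le_iff₀ hβ2).mpr hβ))
  have hβ1 : 0 ≤ β1 := nonneg_of_mul_nonneg_left (le_trans (by positivity) hβ) hβ2
  have hxs : f' xs = 0 :=
    hasGradientAt_eq_zero_of_isLocalMin (hf xs) (Filter.Eventually.of_forall hmin)
  have hderiv := fun t ht =>
    hasDerivAt_lyapunov xs (hx t ht) (hv t ht) (ha t ht) (hf (x t)) (hode t ht)
  have hgap (t : ℝ) : f (x t) - f xs ≤ inner ℝ (f' (x t)) (x t - xs) := by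
    have h := inner_gradient_le_sub_of_convexOn hconv (Set.mem_univ (x t)) (Set.mem_univ xs)
      (hf (x t))
    rw [← neg_sub (x t) xs, inner_neg_right] at h
    linarith
  have hcoco (t : ℝ) : ‖f' (x t)‖ ^ 2 ≤ K * inner ℝ (f' (x t)) (x t - xs) := by
    simpa [hxs] using sq_norm_gradient_sub_le_inner_of_convexOn hconv hf hLip (x t) xs
  have hcont : ContinuousOn (fun t => -(c * (f (x t) - f xs))) (Set.Icc t0 s) := fun t ht =>
    ((((hf (x t)).continuousAt.comp (hx t ht).continuousAt).sub
      continuousAt_const).const_mul c).neg.continuousWithinAt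
  have hdecay := sub_le_integral_of_hasDeriv_right_of_le hs
    (fun t ht => (hderiv t ht).continuousAt.continuousWithinAt)
    (fun t ht => (hderiv t (Set.Ioo_subset_Icc_self ht)).hasDerivWithinAt)
    hcont.integrableOn_Icc (fun t _ => neg_le_neg <|
      (mul_le_mul_of_nonneg_left (hgap t) hc).trans
        (mul_inner_le_dissipation_of_sq_norm_le_inner β0 β1 (a t) hβ2 (hcoco t)))
  rw [integral_neg, integral_const_mul] at hdecay
  linarith [lyapunov_nonneg hβ0 hβ1 hβ2.le (hmin (x s)) (v s) (a s)]

end Dynamics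

theorem stmt16
    {H : Type*} [NormedAddCommGroup H] [InnerProductSpace ℝ H] [CompleteSpace H]
    (f : H → ℝ) (hconv : ConvexOn ℝ Set.univ f) (hdiff : Differentiable ℝ f)
    (M : ℝ) (hM : 0 < M)
    (hLip : ∀ a b : H, ‖gradient f a - gradient f b‖ ≤ M * ‖a - b‖)
    (xs : H) (hmin : ∀ z : H, f xs ≤ f z)
    (β0 β1 β2 : ℝ) (hβ0 : 0 < β0) (hβ1 : 0 < β1) (hβ2 : 0 < β2)
    (hβ : β0 < β1 * β2 / M)
    (t0 : ℝ) (x : ℝ → H)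
    (hx1 : ∀ t, t0 ≤ t → DifferentiableAt ℝ x t)
    (hx2 : ∀ t, t0 ≤ t → DifferentiableAt ℝ (deriv x) t)
    (hx3 : ∀ t, t0 ≤ t → DifferentiableAt ℝ (deriv (deriv x)) t)
    (hode : ∀ t, t0 ≤ t →
      deriv (deriv (deriv x)) t + β2 • deriv (deriv x) t + β1 • deriv x t +
        β0 • gradient f (x t) = 0) :
    ∃ C : ℝ, 0 < C ∧ ∀ s : ℝ, t0 < s →
      f ((1 / (s - t0)) • ∫ t in t0..s, x t) - f xs ≤ C / (s - t0) := by
  lift M to NNReal using hM.le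
  have hgrad (z : H) : HasGradientAt f (gradient f z) z := (hdiff z).hasGradientAt
  have hβM : β0 * M < β1 * β2 := (lt_div_iff₀ hM).mp hβ
  set c := 2 * β0 * (β1 - β0 * M / β2)
  have hc : 0 < c := mul_pos (by positivity) (sub_pos.mpr ((div_lt_iff₀ hβ2).mpr hβM))
  set L := lyapunov f xs β0 β1 β2 (x t0) (deriv x t0) (deriv (deriv x) t0)
  have hL : 0 ≤ L := lyapunov_nonneg hβ0.le hβ1.le hβ2.le (hmin _) _ _
  refine ⟨L / c + 1, by positivity, fun s hs => ?_⟩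
  have hint : c * ∫ t in t0..s, (f (x t) - f xs) ≤ L :=
    mul_integral_gap_le_lyapunov hconv hgrad (.of_dist_le_mul (by simpa [dist_eq_norm] using hLip))
      hmin hβ0.le hβ2 hβM.le hs.le (fun t ht => (hx1 t ht.1).hasDerivAt)
      (fun t ht => (hx2 t ht.1).hasDerivAt) (fun t ht => (hx3 t ht.1).hasDerivAt)
      (fun t ht => hode t ht.1)
  have hx : ContinuousOn x (Set.uIcc t0 s) := fun t ht =>
    (hx1 t (Set.uIcc_of_le hs.le ▸ ht).1).continuousAt.continuousWithinAt
  have hgap : f (⨍ t in t0..s, x t) - f xs ≤ ⨍ t in t0..s, (f (x t) - f xs) :=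
    map_interval_average_le_of_convexOn (hconv.sub (concaveOn_const _ convex_univ))
      (hdiff.continuous.sub continuous_const).continuousOn isClosed_univ hs.ne hx
      (Set.mapsTo_univ _ _)
  rw [interval_average_eq, interval_average_eq_div, ← one_div] at hgap
  have hspos : 0 < s - t0 := sub_pos.mpr hs
  refine hgap.trans (div_le_div_of_nonneg_right ?_ hspos.le)
  linarith [(le_div_iff₀' hc).mpr hint]
end
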